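/- For every fixed real u with 0 < u ≤ 1, the lower-bound expression from the density estimate at the edge satisfies lim_{N→∞} (1/π) · e^{-(√N−u)²} · ((√N−u)^{2N}/N!) · (N+1)/(N+1−(√N−u)²) = e^{-2u²} / (2√2 · u · π^{3/2}). -/

import Mathlib

open scoped Real Topology

/-!
Put `r = (√N - u)²`. The factor `e^{-r} r^N / N!` is the Poisson weight of mean `r` at `N`.
Dividing it by the weight of mean `N` at `N`, which is asymptotic to `1 / √(2πN)` by Stirling's
formula, leaves `e^{2u√N - u²} (1 - u/√N)^{2N}`. Expanding `log (1 - t)` to second order at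
`t = u/√N` shows that this tends to `e^{-2u²}`. The missing factor `√N` comes from the last
fraction, since `N + 1 - (√N - u)² = 2u√N + 1 - u²` has order `√N` rather than `N`.
-/

open Filter Asymptotics

theorem isBigO_sum_range_add_log_one_sub (n : ℕ) :
    (fun t : ℝ => (∑ i ∈ Finset.range n, t ^ (i + 1) / (i + 1)) + Real.log (1 - t))
      =O[𝓝 0] fun t => t ^ (n + 1) := by
  refine IsBigO.of_bound 2 ?_
  filter_upwards [Metric.ball_mem_nhds (0 : ℝ) one_half_pos] with t ht
  have ht : |t| < 1 / 2 := by simpa using ht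
  calc ‖(∑ i ∈ Finset.range n, t ^ (i + 1) / (i + 1)) + Real.log (1 - t)‖
      ≤ |t| ^ (n + 1) / (1 - |t|) := Real.abs_log_sub_add_sum_range_le (by linarith) n
    _ ≤ |t| ^ (n + 1) / (1 / 2) := by gcongr; linarith
    _ = 2 * ‖t ^ (n + 1)‖ := by rw [norm_pow, Real.norm_eq_abs]; ring

theorem tendsto_mul_add_sq_mul_log_one_sub_div (u : ℝ) :
    Tendsto (fun s : ℝ => u * s + s ^ 2 * Real.log (1 - u / s)) atTop (𝓝 (-(u ^ 2 / 2))) := by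
  have hdiv : Tendsto (fun s : ℝ => u / s) atTop (𝓝 0) := tendsto_const_nhds.div_atTop tendsto_id
  have hO : (fun s : ℝ => s ^ 2 * ((∑ i ∈ Finset.range 2, (u / s) ^ (i + 1) / (i + 1))
      + Real.log (1 - u / s))) =O[atTop] fun s => s ^ 2 * (u / s) ^ 3 :=
    (isBigO_refl _ _).mul ((isBigO_sum_range_add_log_one_sub 2).comp_tendsto hdiv)
  have hbound : Tendsto (fun s : ℝ => s ^ 2 * (u / s) ^ 3) atTop (𝓝 0) := by
    have h : Tendsto (fun s : ℝ => u ^ 2 * (u / s)) atTop (𝓝 0) := by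
      simpa using hdiv.const_mul (u ^ 2)
    refine h.congr' ?_
    filter_upwards [eventually_ne_atTop 0] with s hs
    field_simp
  have hlim := (hO.trans_tendsto hbound).sub_const (u ^ 2 / 2)
  rw [zero_sub] at hlim
  refine hlim.congr' ?_
  filter_upwards [eventually_ne_atTop 0] with s hs
  have hsum : s ^ 2 * ∑ i ∈ Finset.range 2, (u / s) ^ (i + 1) / (i + 1) = u * s + u ^ 2 / 2 := by
    simp only [Finset.sum_range_succ, Finset.sum_range_zero]
    push_cast
    field_simp
    ring
  linear_combination hsum

theorem tendsto_sqrt_natCast_atTop : Tendsto (fun n : ℕ => √(n : ℝ)) atTop atTop :=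
  Real.tendsto_sqrt_atTop.comp tendsto_natCast_atTop_atTop

theorem tendsto_exp_mul_one_sub_div_sqrt_pow (u : ℝ) :
    Tendsto (fun n : ℕ => Real.exp (2 * u * √n - u ^ 2) * (1 - u / √n) ^ (2 * n))
      atTop (𝓝 (Real.exp (-2 * u ^ 2))) := by
  have hexponent : Tendsto (fun n : ℕ => 2 * (u * √n + √n ^ 2 * Real.log (1 - u / √n)) - u ^ 2)
      atTop (𝓝 (-2 * u ^ 2)) := by
    convert! (((tendsto_mul_add_sq_mul_log_one_sub_div u).comp
      tendsto_sqrt_natCast_atTop).const_mul 2).sub_const (u ^ 2) using 2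
    ring
  refine ((Real.continuous_exp.tendsto _).comp hexponent).congr' ?_
  filter_upwards [tendsto_sqrt_natCast_atTop.eventually_gt_atTop |u|] with n hn
  have hsqrt : 0 < √(n : ℝ) := (abs_nonneg u).trans_lt hn
  have hbase : 0 < 1 - u / √n := by
    rw [sub_pos, div_lt_one hsqrt]
    exact (le_abs_self u).trans_lt hn
  rw [← Real.exp_log (pow_pos hbase _), ← Real.exp_add, Real.log_pow, Function.comp_apply,
    Real.sq_sqrt n.cast_nonneg]
  push_cast
  ring_nf

theorem tendsto_sqrt_mul_exp_neg_mul_pow_div_factorial :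
    Tendsto (fun n : ℕ => √n * (Real.exp (-n) * (n ^ n / n.factorial))) atTop
      (𝓝 (√2 * √π)⁻¹) := by
  have h := (Stirling.tendsto_stirlingSeq_sqrt_pi.const_mul √2).inv₀ (by positivity)
  refine h.congr fun n => ?_
  rw [Stirling.stirlingSeq, Real.sqrt_mul zero_le_two, div_pow, ← Real.exp_nat_mul, mul_one,
    Real.exp_neg]
  field_simp

theorem tendsto_sqrt_mul_exp_neg_sqrt_sub_sq_mul_pow_div_factorial (u : ℝ) :
    Tendsto (fun n : ℕ =>
        √n * (Real.exp (-(√n - u) ^ 2) * ((√n - u) ^ (2 * n) / n.factorial)))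
      atTop (𝓝 ((√2 * √π)⁻¹ * Real.exp (-2 * u ^ 2))) := by
  refine (tendsto_sqrt_mul_exp_neg_mul_pow_div_factorial.mul
    (tendsto_exp_mul_one_sub_div_sqrt_pow u)).congr' ?_
  filter_upwards [eventually_gt_atTop 0] with n hn
  have hsqrt : √(n : ℝ) ≠ 0 := by positivity
  have hsq : √(n : ℝ) ^ 2 = n := Real.sq_sqrt n.cast_nonneg
  have hexp : Real.exp (-(√n - u) ^ 2) = Real.exp (-n) * Real.exp (2 * u * √n - u ^ 2) := by
    rw [← Real.exp_add]
    congr 1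
    linear_combination -hsq
  have hpow : (√n - u) ^ (2 * n) = n ^ n * (1 - u / √n) ^ (2 * n) := by
    rw [show √n - u = √n * (1 - u / √n) by field_simp, mul_pow, pow_mul √n, hsq]
  rw [hexp, hpow]
  ring

theorem tendsto_sq_add_one_div_sub_sq_div {u : ℝ} (hu : u ≠ 0) :
    Tendsto (fun s : ℝ => (s ^ 2 + 1) / (s ^ 2 + 1 - (s - u) ^ 2) / s) atTop
      (𝓝 (1 / (2 * u))) := by
  have hinv : Tendsto (fun s : ℝ => s⁻¹) atTop (𝓝 0) := tendsto_inv_atTop_zero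
  have hlim : Tendsto (fun s : ℝ => (1 + s⁻¹ ^ 2) / (2 * u + (1 - u ^ 2) * s⁻¹)) atTop
      (𝓝 ((1 + 0 ^ 2) / (2 * u + (1 - u ^ 2) * 0))) :=
    ((hinv.pow 2).const_add 1).div ((hinv.const_mul _).const_add _) (by simpa using hu)
  rw [zero_pow two_ne_zero, add_zero, mul_zero, add_zero] at hlim
  refine hlim.congr' ?_
  filter_upwards [eventually_ne_atTop 0] with s hs
  have hnum : s ^ 2 + 1 = s ^ 2 * (1 + s⁻¹ ^ 2) := by field_simp
  have hden : (s ^ 2 + 1 - (s - u) ^ 2) * s = s ^ 2 * (2 * u + (1 - u ^ 2) * s⁻¹) := by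
    field_simp
    ring
  rw [div_div, hden, hnum, mul_div_mul_left _ _ (pow_ne_zero 2 hs)]

theorem edge_lower_bound_limit_general {u : ℝ} (hu : u ≠ 0) :
    Tendsto
      (fun N : ℕ =>
        (1 / π) * Real.exp (-(√N - u) ^ 2) * ((√N - u) ^ (2 * N) / N.factorial) *
          ((N + 1) / (N + 1 - (√N - u) ^ 2)))
      atTop (𝓝 (Real.exp (-2 * u ^ 2) / (2 * √2 * u * π ^ ((3 : ℝ) / 2)))) := by
  have hweight := tendsto_sqrt_mul_exp_neg_sqrt_sub_sq_mul_pow_div_factorial u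
  have hratio := (tendsto_sq_add_one_div_sub_sq_div hu).comp tendsto_sqrt_natCast_atTop
  have hpi : π ^ ((3 : ℝ) / 2) = π * √π := by
    rw [show (3 : ℝ) / 2 = 1 + 1 / 2 by norm_num, Real.rpow_add Real.pi_pos, Real.rpow_one,
      Real.sqrt_eq_rpow]
  have hlim : 1 / π * ((√2 * √π)⁻¹ * Real.exp (-2 * u ^ 2)) * (1 / (2 * u))
      = Real.exp (-2 * u ^ 2) / (2 * √2 * u * π ^ ((3 : ℝ) / 2)) := by
    rw [hpi]
    field_simp
  rw [← hlim]
  refine ((hweight.const_mul (1 / π)).mul hratio).congr' ?_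
  filter_upwards [eventually_gt_atTop 0] with N hN
  have hsqrt : √(N : ℝ) ≠ 0 := by positivity
  rw [Function.comp_apply, Real.sq_sqrt N.cast_nonneg]
  field_simp

/-- Limit of the lower edge bound `(1/π) e^{-(√N−u)²} ((√N−u)^{2N}/N!) · (N+1)/(N+1−(√N−u)²)`
as `N → ∞`. -/
theorem edge_lower_bound_limit (u : ℝ) (hu0 : 0 < u) (hu1 : u ≤ 1) :
    Filter.Tendsto
      (fun N : ℕ =>
        (1 / Real.pi) * Real.exp (-(Real.sqrt N - u) ^ 2) *
          ((Real.sqrt N - u) ^ (2 * N) / N.factorial) *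
          ((N + 1) / (N + 1 - (Real.sqrt N - u) ^ 2)))
      Filter.atTop
      (𝓝 (Real.exp (-2 * u ^ 2) / (2 * Real.sqrt 2 * u * Real.pi ^ ((3 : ℝ) / 2)))) :=
  edge_lower_bound_limit_general hu0.ne'
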